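/- arXiv:1007.1685 — 2 statements merged into one kernel-verified Lean document; each statement's English description precedes it below -/
import Mathlib

section
/- Weyl relation in the factorized space (part of Schwinger's factorization theorem): let N₁, N₂ be positive integers with gcd(N₁, N₂) = 1, N = N₁ · N₂, and let r₁, r₂ be integers with r₁·N₂ + r₂·N₁ ≡ 1 (mod N). Set V = V₁ ⊗ V₂ and U = U₁^{r₁} ⊗ U₂^{r₂} (Kronecker products of matrices indexed by ZMod N₁ × ZMod N₂). Then V * U = exp(2πi/N) • (U * V). -/
theorem aux_diag_zpow {n : Type*} [Fintype n] [DecidableEq n] (d : n → ℂ) (hd : ∀ i, d i ≠ 0)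
    (r : ℤ) : (Matrix.diagonal d) ^ r = Matrix.diagonal (fun i => d i ^ r) := by
  cases r with
  | ofNat k =>
    simp only [Int.ofNat_eq_natCast, zpow_natCast, Matrix.diagonal_pow]
    rfl
  | negSucc k =>
    rw [_root_.zpow_negSucc, Matrix.diagonal_pow]
    apply Matrix.inv_eq_right_inv
    rw [Matrix.diagonal_mul_diagonal, ← Matrix.diagonal_one]
    congr 1
    funext i
    simp only [Pi.pow_apply, zpow_negSucc]
    exact mul_inv_cancel₀ (pow_ne_zero _ (hd i))

theorem aux_weyl (N : ℕ) [NeZero N] (r : ℤ) (V U : Matrix (ZMod N) (ZMod N) ℂ)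
    (hV : ∀ a b : ZMod N, V a b = if b = a + 1 then 1 else 0)
    (hU : ∀ a b : ZMod N,
      U a b = if a = b then Complex.exp (2 * Real.pi * Complex.I / N) ^ a.val else 0) :
    V * U ^ r = Complex.exp (2 * Real.pi * Complex.I / N) ^ r • (U ^ r * V) := by
  have hN : (N : ℂ) ≠ 0 := Nat.cast_ne_zero.mpr (NeZero.ne N)
  have hw1 : Complex.exp (2 * Real.pi * Complex.I / N) ^ N = 1 := by
    rw [← Complex.exp_nat_mul, mul_div_cancel₀ _ hN, Complex.exp_two_pi_mul_I]
  have hw0 : Complex.exp (2 * Real.pi * Complex.I / N) ≠ 0 := Complex.exp_ne_zero _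
  generalize Complex.exp (2 * Real.pi * Complex.I / N) = w at *
  have hUd : U = Matrix.diagonal (fun a : ZMod N => w ^ a.val) := by
    ext a b
    rw [hU, Matrix.diagonal_apply]
  have hs : ∀ a : ZMod N, w ^ (a + 1).val = w * w ^ a.val := by
    intro a
    rw [ZMod.val_add, ← pow_eq_pow_mod _ hw1, pow_add, ZMod.val_one_eq_one_mod,
      ← pow_eq_pow_mod _ hw1, pow_one, mul_comm]
  rw [hUd, aux_diag_zpow _ (fun i => pow_ne_zero _ hw0)]
  ext a b
  rw [Matrix.smul_apply, Matrix.mul_diagonal, Matrix.diagonal_mul, hV]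
  split_ifs with h
  · subst h
    rw [hs, mul_zpow]
    simp
  · simp

open Kronecker in
/-- Weyl relation in the factorized space: for coprime `N₁, N₂` with `N = N₁·N₂` and
integers `r₁, r₂` with `r₁·N₂ + r₂·N₁ ≡ 1 (mod N)`, setting `V = V₁ ⊗ V₂` and
`U = U₁^{r₁} ⊗ U₂^{r₂}`, one has `V * U = exp(2πi/N) • (U * V)`. -/
theorem factorized_weyl_relation (N₁ N₂ : ℕ) [NeZero N₁] [NeZero N₂]
    (hcop : Nat.gcd N₁ N₂ = 1)
    (r₁ r₂ : ℤ)
    (hr : r₁ * N₂ + r₂ * N₁ ≡ 1 [ZMOD ((N₁ : ℤ) * N₂)])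
    (V₁ U₁ : Matrix (ZMod N₁) (ZMod N₁) ℂ)
    (hV₁ : ∀ a b : ZMod N₁, V₁ a b = if b = a + 1 then 1 else 0)
    (hU₁ : ∀ a b : ZMod N₁,
      U₁ a b = if a = b then Complex.exp (2 * Real.pi * Complex.I / N₁) ^ a.val else 0)
    (V₂ U₂ : Matrix (ZMod N₂) (ZMod N₂) ℂ)
    (hV₂ : ∀ a b : ZMod N₂, V₂ a b = if b = a + 1 then 1 else 0)
    (hU₂ : ∀ a b : ZMod N₂,
      U₂ a b = if a = b then Complex.exp (2 * Real.pi * Complex.I / N₂) ^ a.val else 0) :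
    (V₁ ⊗ₖ V₂) * ((U₁ ^ r₁) ⊗ₖ (U₂ ^ r₂)) =
      Complex.exp (2 * Real.pi * Complex.I / (N₁ * N₂ : ℕ)) •
        (((U₁ ^ r₁) ⊗ₖ (U₂ ^ r₂)) * (V₁ ⊗ₖ V₂)) := by
  rw [← Matrix.mul_kronecker_mul, ← Matrix.mul_kronecker_mul, aux_weyl N₁ r₁ V₁ U₁ hV₁ hU₁,
    aux_weyl N₂ r₂ V₂ U₂ hV₂ hU₂, Matrix.smul_kronecker, Matrix.kronecker_smul, smul_smul]
  congr 1
  have h1 : (N₁ : ℂ) ≠ 0 := Nat.cast_ne_zero.mpr (NeZero.ne N₁)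
  have h2 : (N₂ : ℂ) ≠ 0 := Nat.cast_ne_zero.mpr (NeZero.ne N₂)
  obtain ⟨k, hk⟩ := hr.dvd
  have hk' : (1 : ℂ) - (r₁ * N₂ + r₂ * N₁) = N₁ * N₂ * k := by exact_mod_cast hk
  rw [← Complex.exp_int_mul, ← Complex.exp_int_mul, ← Complex.exp_add,
    Complex.exp_eq_exp_iff_exists_int]
  refine ⟨-k, ?_⟩
  push_cast
  field_simp
  linear_combination (-1 : ℂ) * hk'
end

section
/- Overlap formula in the factorized space (part of Schwinger's factorization theorem): let N₁, N₂ be positive integers with gcd(N₁, N₂) = 1, N = N₁ · N₂, and let r₁, r₂ be integers with r₁·N₂ + r₂·N₁ ≡ 1 (mod N). Define u_j ∈ ℂ^{ZMod N₁ × ZMod N₂} for j ∈ ZMod N by u_j = e_{j mod N₁} ⊗ e_{j mod N₂}, let v₀ be the uniform vector with all components 1/√N, set U = U₁^{r₁} ⊗ U₂^{r₂}, and define v_k = U^k v₀ for k ∈ ZMod N. Then for all j, k ∈ ZMod N the inner product satisfies ⟨u_j, v_k⟩ = exp(2πi·jk/N)/√N; in particular (v_k)_{k ∈ ZMod N} is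 an orthonormal basis of ℂ^{ZMod N₁ × ZMod N₂}. -/
theorem aux_root (N : ℕ) [NeZero N] (j : ℕ) :
    Complex.exp (2 * Real.pi * Complex.I / N) ^ ((j : ZMod N)).val
      = Complex.exp (2 * Real.pi * Complex.I / N) ^ j := by
  have h := Complex.isPrimitiveRoot_exp N (NeZero.ne N)
  rw [ZMod.val_natCast]
  conv_rhs => rw [← Nat.mod_add_div j N, pow_add, pow_mul, h.pow_eq_one, one_pow, mul_one]

open Kronecker in
open scoped ComplexInnerProductSpace in
/-- Overlap formula in the factorized space: with `u_j = e_{j mod N₁} ⊗ e_{j mod N₂}`,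
`v₀` the uniform vector, `U = U₁^{r₁} ⊗ U₂^{r₂}` and `v_k = U^k v₀`, one has
`⟨u_j, v_k⟩ = exp(2πi·jk/N)/√N`; in particular the `v_k` form an orthonormal basis. -/
theorem factorized_overlap_formula (N₁ N₂ : ℕ) [NeZero N₁] [NeZero N₂]
    (hcop : Nat.gcd N₁ N₂ = 1)
    (r₁ r₂ : ℤ)
    (hr : r₁ * N₂ + r₂ * N₁ ≡ 1 [ZMOD ((N₁ : ℤ) * N₂)])
    (U₁ : Matrix (ZMod N₁) (ZMod N₁) ℂ)
    (hU₁ : ∀ a b : ZMod N₁,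
      U₁ a b = if a = b then Complex.exp (2 * Real.pi * Complex.I / N₁) ^ a.val else 0)
    (U₂ : Matrix (ZMod N₂) (ZMod N₂) ℂ)
    (hU₂ : ∀ a b : ZMod N₂,
      U₂ a b = if a = b then Complex.exp (2 * Real.pi * Complex.I / N₂) ^ a.val else 0)
    (u : ZMod (N₁ * N₂) → EuclideanSpace ℂ (ZMod N₁ × ZMod N₂))
    (hu : ∀ (j : ZMod (N₁ * N₂)) (p : ZMod N₁ × ZMod N₂),
      u j p = if p.1 = (j.val : ZMod N₁) ∧ p.2 = (j.val : ZMod N₂) then 1 else 0)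
    (v₀ : EuclideanSpace ℂ (ZMod N₁ × ZMod N₂))
    (hv₀ : ∀ p : ZMod N₁ × ZMod N₂, v₀ p = 1 / Real.sqrt (N₁ * N₂))
    (v : ZMod (N₁ * N₂) → EuclideanSpace ℂ (ZMod N₁ × ZMod N₂))
    (hv : ∀ k : ZMod (N₁ * N₂),
      v k = Matrix.toEuclideanLin (((U₁ ^ r₁) ⊗ₖ (U₂ ^ r₂)) ^ k.val) v₀) :
    (∀ j k : ZMod (N₁ * N₂),
      (⟪u j, v k⟫ : ℂ) =
        Complex.exp (2 * Real.pi * Complex.I * (j.val * k.val) / (N₁ * N₂ : ℕ)) /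
          Real.sqrt (N₁ * N₂)) ∧
    Orthonormal ℂ v ∧ Submodule.span ℂ (Set.range v) = ⊤ := by
  have h1 : (N₁ : ℂ) ≠ 0 := Nat.cast_ne_zero.2 (NeZero.ne N₁)
  have h2 : (N₂ : ℂ) ≠ 0 := Nat.cast_ne_zero.2 (NeZero.ne N₂)
  have hU1 : U₁ = Matrix.diagonal
      (fun a => Complex.exp (2 * Real.pi * Complex.I / N₁) ^ a.val) := by
    ext a b
    rw [hU₁, Matrix.diagonal_apply]
  have hU2 : U₂ = Matrix.diagonal
      (fun a => Complex.exp (2 * Real.pi * Complex.I / N₂) ^ a.val) := by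
    ext a b
    rw [hU₂, Matrix.diagonal_apply]
  have hvp : ∀ (k : ZMod (N₁ * N₂)) (p : ZMod N₁ × ZMod N₂), v k p =
      ((Complex.exp (2 * Real.pi * Complex.I / N₁) ^ p.1.val) ^ r₁ *
       (Complex.exp (2 * Real.pi * Complex.I / N₂) ^ p.2.val) ^ r₂) ^ k.val
        * (1 / Real.sqrt (N₁ * N₂)) := by
    intro k p
    rw [hv, hU1, hU2, aux_diag_zpow _ (fun i => pow_ne_zero _ (Complex.exp_ne_zero _)),
      aux_diag_zpow _ (fun i => pow_ne_zero _ (Complex.exp_ne_zero _)),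
      Matrix.diagonal_kronecker_diagonal, Matrix.diagonal_pow, ← hv₀ p]
    simp [Matrix.toLpLin_apply, Matrix.mulVec_diagonal]
  have hvj : ∀ j k : ZMod (N₁ * N₂), v k ((j.val : ZMod N₁), (j.val : ZMod N₂)) =
      Complex.exp (2 * Real.pi * Complex.I * (j.val * k.val) / (N₁ * N₂ : ℕ)) /
          Real.sqrt (N₁ * N₂) := by
    intro j k
    rw [hvp, aux_root, aux_root, mul_one_div]
    congr 1
    obtain ⟨t, ht⟩ := hr.symm.dvd
    have ht' : (r₁ : ℂ) * N₂ + r₂ * N₁ = 1 + N₁ * N₂ * t := by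
      have : r₁ * N₂ + r₂ * N₁ = 1 + N₁ * N₂ * t := by linarith
      exact_mod_cast this
    rw [← Complex.exp_nat_mul, ← Complex.exp_nat_mul, ← Complex.exp_int_mul,
      ← Complex.exp_int_mul, ← Complex.exp_add, ← Complex.exp_nat_mul,
      Complex.exp_eq_exp_iff_exists_int]
    refine ⟨j.val * k.val * t, ?_⟩
    push_cast
    field_simp
    linear_combination (j.val * k.val : ℂ) * ht'
  have hin : ∀ j k : ZMod (N₁ * N₂), (⟪u j, v k⟫ : ℂ) =
      v k ((j.val : ZMod N₁), (j.val : ZMod N₂)) := by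
    intro j k
    rw [PiLp.inner_apply, Finset.sum_eq_single ((j.val : ZMod N₁), (j.val : ZMod N₂))]
    · simp [hu]
    · intro p _ hp
      have : ¬ (p.1 = (j.val : ZMod N₁) ∧ p.2 = (j.val : ZMod N₂)) :=
        fun h => hp (Prod.ext h.1 h.2)
      rw [hu, if_neg this]
      simp
    · simp
  have hchar : ∀ j k : ZMod (N₁ * N₂), v k ((j.val : ZMod N₁), (j.val : ZMod N₂)) =
      ZMod.stdAddChar (j * k) / Real.sqrt (N₁ * N₂) := by
    intro j k
    rw [hvj]
    congr 1
    have := ZMod.stdAddChar_coe (N := N₁ * N₂) ((j.val : ℤ) * k.val)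
    push_cast [ZMod.natCast_zmod_val] at this
    rw [this]
    push_cast
    rfl
  have hbij : Function.Bijective (fun j : ZMod (N₁ * N₂) =>
      (((j.val : ZMod N₁), (j.val : ZMod N₂)) : ZMod N₁ × ZMod N₂)) := by
    have : (fun j : ZMod (N₁ * N₂) =>
      (((j.val : ZMod N₁), (j.val : ZMod N₂)) : ZMod N₁ × ZMod N₂)) =
        ZMod.chineseRemainder hcop := by
      funext j
      conv_rhs => rw [← ZMod.natCast_zmod_val j, map_natCast]
      rfl
    rw [this]
    exact (ZMod.chineseRemainder hcop).bijective
  have hs : ((Real.sqrt (N₁ * N₂) : ℝ) : ℂ) * (Real.sqrt (N₁ * N₂) : ℝ) = N₁ * N₂ := by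
    rw [← Complex.ofReal_mul, Real.mul_self_sqrt (by positivity)]
    push_cast
    rfl
  have hort : Orthonormal ℂ v := by
    rw [orthonormal_iff_ite]
    intro k l
    rw [PiLp.inner_apply, ← hbij.sum_comp]
    have : ∀ j : ZMod (N₁ * N₂),
        (⟪v k ((j.val : ZMod N₁), (j.val : ZMod N₂)),
          v l ((j.val : ZMod N₁), (j.val : ZMod N₂))⟫ : ℂ) =
        ZMod.stdAddChar (j * (l - k)) / (N₁ * N₂) := by
      intro j
      rw [hchar, hchar, RCLike.inner_apply, map_div₀, Complex.conj_ofReal,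
        ← AddChar.map_neg_eq_conj, div_mul_div_comm, hs, ← AddChar.map_add_eq_mul]
      congr 2
      ring
    simp only [this]
    rw [← Finset.sum_div, AddChar.sum_mulShift _ (ZMod.isPrimitive_stdAddChar _)]
    simp only [sub_eq_zero, ZMod.card, eq_comm (a := l)]
    split_ifs
    · push_cast
      field_simp
    · simp
  refine ⟨fun j k => (hin j k).trans (hvj j k), hort, ?_⟩
  apply hort.linearIndependent.span_eq_top_of_card_eq_finrank'
  simp [ZMod.card]
end
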